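/- arXiv:2410.12137 — 2 statements merged into one kernel-verified Lean document; each statement's English description precedes it below -/
import Mathlib

section
/- Let α > 0 and define F(t) = Σ_{n=0}^∞ ((−α/2)_n)²/(n!)² · tⁿ for t ∈ [0,1). Then F(t) > 0 and t·F′(t) ≤ (α/4)·F(t) for every t ∈ [0,1). -/
/-!
Put `a = α / 2` and `c n = ((-a)_n / n!) ^ 2 ≥ 0`, so that `F t = ∑ c n * t ^ n` and
`(n + 1) ^ 2 * c (n + 1) = (n - a) ^ 2 * c n`. With the moments `S k = ∑ n ^ k * c n * t ^ n`, summing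
the recurrence against `t ^ (n + 1)` gives the hypergeometric equation in the form
`S 2 = t * (S 2 - 2 * a * S 1 + a ^ 2 * S 0)`, that is
`(1 - t) * S 2 = t * a * (a * S 0 - 2 * S 1)`.
The left side is nonnegative, so `S 1 ≤ (a / 2) * S 0` for `0 < t < 1`; here `S 0 = F t` and
`S 1 = t * F' t`. Since the ratio `c (n + 1) / c n` is at most one once `n ≥ a`, the
coefficients are bounded, which gives convergence of all the moments and termwise differentiation.
Positivity of `F` holds because `c 0 = 1`.
-/

/-- The Pochhammer symbol `(a)_n = a(a+1)⋯(a+n-1)`. -/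
noncomputable def poch (a : ℝ) : ℕ → ℝ
  | 0 => 1
  | n + 1 => poch a n * (a + n)

/-- The `n`-th Taylor coefficient `((b)_n / n!) ^ 2` of `F(b, b; 1; t)`. -/
noncomputable def hypCoeff (b : ℝ) (n : ℕ) : ℝ := (poch b n) ^ 2 / ((n.factorial : ℝ)) ^ 2

lemma hypCoeff_nonneg (b : ℝ) (n : ℕ) : 0 ≤ hypCoeff b n := by
  unfold hypCoeff; positivity

lemma hypCoeff_succ (b : ℝ) (n : ℕ) :
    ((n : ℝ) + 1) ^ 2 * hypCoeff b (n + 1) = (n + b) ^ 2 * hypCoeff b n := by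
  have h : (n.factorial : ℝ) ≠ 0 := by positivity
  have h' : (n : ℝ) + 1 ≠ 0 := by positivity
  simp only [hypCoeff, poch, Nat.factorial_succ]
  push_cast
  field_simp
  ring

/-- For `b ≤ 0` the coefficients are nonincreasing from the index `⌈-b⌉₊` on. -/
lemma hypCoeff_bounded (b : ℝ) (hb : b ≤ 0) : ∃ C : ℝ, ∀ n, hypCoeff b n ≤ C := by
  obtain ⟨N, hN⟩ := exists_nat_ge (-b)
  refine ⟨∑ i ∈ Finset.range (N + 1), hypCoeff b i, fun n => ?_⟩
  induction n with
  | zero =>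
    exact Finset.single_le_sum (f := hypCoeff b) (fun i _ => hypCoeff_nonneg b i) (by simp)
  | succ n ih =>
    by_cases hn : n < N
    · exact Finset.single_le_sum (f := hypCoeff b) (fun i _ => hypCoeff_nonneg b i)
        (Finset.mem_range.2 (by omega))
    · refine le_trans ?_ ih
      have hn' : (N : ℝ) ≤ n := by exact_mod_cast not_lt.1 hn
      have h1 : ((n : ℝ) + b) ^ 2 ≤ ((n : ℝ) + 1) ^ 2 :=
        pow_le_pow_left₀ (by linarith) (by linarith) 2
      have h2 := mul_le_mul_of_nonneg_right h1 (hypCoeff_nonneg b n)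
      rw [← hypCoeff_succ] at h2
      exact le_of_mul_le_mul_left h2 (by positivity)

lemma summable_moment (b : ℝ) (hb : b ≤ 0) (k : ℕ) {t : ℝ} (h0 : 0 ≤ t) (h1 : t < 1) :
    Summable fun n : ℕ => (n : ℝ) ^ k * (hypCoeff b n * t ^ n) := by
  obtain ⟨C, hC⟩ := hypCoeff_bounded b hb
  have hs : Summable fun n : ℕ => C * ((n : ℝ) ^ k * t ^ n) :=
    (summable_pow_mul_geometric_of_norm_lt_one k
      (by rwa [Real.norm_eq_abs, abs_of_nonneg h0])).mul_left C
  refine Summable.of_nonneg_of_le (fun n => ?_) (fun n => ?_) hs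
  · have := hypCoeff_nonneg b n
    positivity
  · have := mul_le_mul_of_nonneg_right (hC n) (show 0 ≤ (n : ℝ) ^ k * t ^ n by positivity)
    linarith

lemma hasDerivAt_hyp (b : ℝ) (hb : b ≤ 0) {t : ℝ} (h0 : 0 < t) (h1 : t < 1) :
    HasDerivAt (fun s : ℝ => ∑' n : ℕ, hypCoeff b n * s ^ n)
      (∑' n : ℕ, hypCoeff b n * (n * t ^ (n - 1))) t := by
  obtain ⟨r, htr, hr1⟩ := exists_between h1
  have hr0 : 0 < r := h0.trans htr
  -- `n * r ^ (n - 1) = r⁻¹ * (n * r ^ n)` for every `n`, since both sides vanish at `n = 0`.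
  have hu : Summable fun n : ℕ => hypCoeff b n * (n * r ^ (n - 1)) := by
    refine ((summable_moment b hb 1 hr0.le hr1).mul_left r⁻¹).congr fun n => ?_
    cases n with
    | zero => simp
    | succ m =>
      simp only [Nat.add_sub_cancel, pow_succ]
      field_simp
  refine hasDerivAt_tsum_of_isPreconnected (t := Set.Ioo 0 r) (y₀ := t) hu isOpen_Ioo
    isPreconnected_Ioo
    (fun n y _ => (hasDerivAt_pow n y).const_mul (hypCoeff b n))
    (fun n y hy => ?_) ⟨h0, htr⟩ ?_ ⟨h0, htr⟩
  · have hc := hypCoeff_nonneg b n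
    have hy0 : 0 ≤ y := hy.1.le
    rw [Real.norm_eq_abs, abs_of_nonneg (by positivity)]
    have := hy.2.le
    gcongr
  · simpa using summable_moment b hb 0 h0.le h1

/-- The hypergeometric equation `θ² F = t (θ + b)² F`, `θ = t d/dt`, in terms of the moments. -/
lemma moment_equation (b : ℝ) (hb : b ≤ 0) {t : ℝ} (h0 : 0 ≤ t) (h1 : t < 1) :
    ∑' n : ℕ, (n : ℝ) ^ 2 * (hypCoeff b n * t ^ n) =
      t * (∑' n : ℕ, (n : ℝ) ^ 2 * (hypCoeff b n * t ^ n)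
        + 2 * b * ∑' n : ℕ, (n : ℝ) ^ 1 * (hypCoeff b n * t ^ n)
        + b ^ 2 * ∑' n : ℕ, (n : ℝ) ^ 0 * (hypCoeff b n * t ^ n)) := by
  have s0 := summable_moment b hb 0 h0 h1
  have s1 := summable_moment b hb 1 h0 h1
  have s2 := summable_moment b hb 2 h0 h1
  have H := ((s2.hasSum.add (s1.hasSum.mul_left (2 * b))).add
    (s0.hasSum.mul_left (b ^ 2))).mul_left t
  rw [← H.tsum_eq, s2.tsum_eq_zero_add]
  simp only [Nat.cast_zero, ne_eq, OfNat.ofNat_ne_zero, not_false_eq_true, zero_pow, zero_mul,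
    zero_add]
  refine tsum_congr fun n => ?_
  have := hypCoeff_succ b n
  push_cast
  linear_combination t ^ (n + 1) * this

/-- For `α > 0` and `F(t) = F(-α/2, -α/2; 1; t) = Σ ((-α/2)_n)²/(n!)² tⁿ` one has
`F(t) > 0` and `t F'(t) ≤ (α/4) F(t)` on `[0,1)`. -/
theorem hypergeometric_positive_and_log_deriv_bound (α : ℝ) (hα : 0 < α) :
    ∀ t ∈ Set.Ico (0:ℝ) 1,
      0 < (∑' n : ℕ, (poch (-α / 2) n)^2 / ((n.factorial : ℝ))^2 * t ^ n) ∧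
      t * deriv (fun s : ℝ => ∑' n : ℕ, (poch (-α / 2) n)^2 / ((n.factorial : ℝ))^2 * s ^ n) t ≤
        (α / 4) * ∑' n : ℕ, (poch (-α / 2) n)^2 / ((n.factorial : ℝ))^2 * t ^ n := by
  rintro t ⟨h0, h1⟩
  have hb : -α / 2 ≤ 0 := by linarith
  change 0 < (∑' n : ℕ, hypCoeff (-α / 2) n * t ^ n) ∧
    t * deriv (fun s : ℝ => ∑' n : ℕ, hypCoeff (-α / 2) n * s ^ n) t ≤
      (α / 4) * ∑' n : ℕ, hypCoeff (-α / 2) n * t ^ n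
  have hnn : ∀ n, 0 ≤ hypCoeff (-α / 2) n * t ^ n := fun n =>
    mul_nonneg (hypCoeff_nonneg _ n) (pow_nonneg h0 n)
  have hpos : 0 < ∑' n : ℕ, hypCoeff (-α / 2) n * t ^ n :=
    (by simpa using summable_moment (-α / 2) hb 0 h0 h1 :
      Summable fun n : ℕ => hypCoeff (-α / 2) n * t ^ n).tsum_pos hnn 0
      (by simp [hypCoeff, poch])
  refine ⟨hpos, ?_⟩
  rcases h0.eq_or_lt with rfl | ht
  · rw [zero_mul]
    positivity
  have hS1 : t * deriv (fun s : ℝ => ∑' n : ℕ, hypCoeff (-α / 2) n * s ^ n) t =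
      ∑' n : ℕ, (n : ℝ) ^ 1 * (hypCoeff (-α / 2) n * t ^ n) := by
    rw [(hasDerivAt_hyp _ hb ht h1).deriv, ← tsum_mul_left]
    refine tsum_congr fun n => ?_
    cases n with
    | zero => simp
    | succ m =>
      simp only [Nat.add_sub_cancel]
      ring
  have hE := moment_equation (-α / 2) hb h0 h1
  have hS2 : 0 ≤ ∑' n : ℕ, (n : ℝ) ^ 2 * (hypCoeff (-α / 2) n * t ^ n) :=
    tsum_nonneg fun n => mul_nonneg (by positivity) (hnn n)
  rw [← hS1] at hE
  simp only [pow_zero, one_mul] at hE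
  set S2 := ∑' n : ℕ, (n : ℝ) ^ 2 * (hypCoeff (-α / 2) n * t ^ n)
  set S1 := t * deriv (fun s : ℝ => ∑' n : ℕ, hypCoeff (-α / 2) n * s ^ n) t
  set S0 := ∑' n : ℕ, hypCoeff (-α / 2) n * t ^ n
  have h2 : (t * α) * (α / 4 * S0 - S1) = (1 - t) * S2 := by linear_combination -hE
  have h3 : 0 ≤ (t * α) * (α / 4 * S0 - S1) := by
    rw [h2]
    exact mul_nonneg (by linarith) hS2
  have := nonneg_of_mul_nonneg_right h3 (by positivity)
  linarith
end

section
/- Let p > 1, α > −1 and t ∈ (0,π). Then ∫_{−1}^{1} (1−r²)^{α+1/p} · (1 − 2r·cos t + r²)^{−(α+2)/2} dr = 2^{α+1/p} · (sin t)^{1/p−1} · G(t), where G(t) = ∫₀^{π/2} (sin x)^{α+1/p}·(cos x)^{α+1/p}·(sin(x + t/2))^{−(α+2/p)} dx. -/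
/-!
The identity is a change of variables with a geometric meaning. Let `A = -1`, `B = 1` be the
endpoints of a diameter of the unit circle and `C = e^{it}`. The triangle `ABC` has a right angle
at `C` and the angle `t/2` at `A`. For `r ∈ [-1, 1]` on the diameter, take the angle
`x = ∠ACr ∈ [0, π/2]` as the new variable. With `S = sin (x + t/2)`, the law of sines gives
`1 + r = 2 cos (t/2) sin x / S` and `1 - r = 2 sin (t/2) cos x / S`, and
`|C - r| = sin t / S`, so that
`1 - r² = 2 sin t sin x cos x / S²` (`one_sub_radialSubst_sq`),
`1 - 2 r cos t + r² = (sin t / S)²` (`dist_sq_radialSubst`) and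
`dr = sin t / S² dx` (`hasDerivAt_radialSubst`).
Since `r` increases from `-1` to `1`, it remains to collect the powers of `2`, `sin t` and `S`.
-/


/-- `G(t) = ∫₀^{π/2} (sin x)^{α+1/p} (cos x)^{α+1/p} (sin(x+t/2))^{-(α+2/p)} dx`. -/
noncomputable def Gfun (α p t : ℝ) : ℝ :=
  ∫ x in (0:ℝ)..(Real.pi / 2),
    Real.sin x ^ (α + 1 / p) * Real.cos x ^ (α + 1 / p) *
      Real.sin (x + t / 2) ^ (-(α + 2 / p))

/-- The point `r` of the diameter `[-1, 1]` that is seen from `e^{it}` under the angle `x`,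
measured from the endpoint `-1`. -/
noncomputable def radialSubst (t x : ℝ) : ℝ :=
  2 * Real.cos (t / 2) * Real.sin x / Real.sin (x + t / 2) - 1

lemma sin_add_half_pos {t x : ℝ} (ht : t ∈ Set.Ioo 0 Real.pi)
    (hx : x ∈ Set.Icc 0 (Real.pi / 2)) : 0 < Real.sin (x + t / 2) :=
  Real.sin_pos_of_pos_of_lt_pi (by linarith [ht.1, hx.1]) (by linarith [ht.2, hx.2])

lemma sin_eq_two_mul_half (t : ℝ) : Real.sin t = 2 * Real.sin (t / 2) * Real.cos (t / 2) := by
  rw [← Real.sin_two_mul]; ring_nf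

lemma hasDerivAt_radialSubst {t x : ℝ} (hS : Real.sin (x + t / 2) ≠ 0) :
    HasDerivAt (radialSubst t) (Real.sin t / Real.sin (x + t / 2) ^ 2) x := by
  have h1 : HasDerivAt (fun y => Real.sin (y + t / 2)) (Real.cos (x + t / 2)) x := by
    simpa using ((hasDerivAt_id x).add_const (t / 2)).sin
  have h2 := (((Real.hasDerivAt_sin x).const_mul (2 * Real.cos (t / 2))).div h1 hS).sub_const 1
  refine h2.congr_deriv ?_
  congr 1
  -- The numerator contains `sin (x + t/2) cos x - cos (x + t/2) sin x = sin (t/2)`.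
  have h3 : Real.sin (t / 2) =
      Real.sin (x + t / 2) * Real.cos x - Real.cos (x + t / 2) * Real.sin x := by
    rw [← Real.sin_sub]; ring_nf
  rw [sin_eq_two_mul_half t, h3]; ring

lemma one_sub_radialSubst_sq {t x : ℝ} (hS : Real.sin (x + t / 2) ≠ 0) :
    1 - radialSubst t x ^ 2 =
      2 * Real.sin t * (Real.sin x * Real.cos x) / Real.sin (x + t / 2) ^ 2 := by
  have h := Real.sin_add x (t / 2)
  rw [radialSubst, sin_eq_two_mul_half t]
  generalize Real.sin (x + t / 2) = S at *
  generalize Real.sin x = a at *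
  generalize Real.cos x = b at *
  generalize Real.sin (t / 2) = c at *
  generalize Real.cos (t / 2) = d at *
  field_simp
  rw [h]
  ring

lemma dist_sq_radialSubst {t x : ℝ} (hS : Real.sin (x + t / 2) ≠ 0) :
    1 - 2 * radialSubst t x * Real.cos t + radialSubst t x ^ 2 =
      (Real.sin t / Real.sin (x + t / 2)) ^ 2 := by
  have h := Real.sin_add x (t / 2)
  have hc : Real.cos t = Real.cos (t / 2) ^ 2 - Real.sin (t / 2) ^ 2 := by
    rw [← Real.cos_two_mul']; ring_nf
  have e1 := Real.sin_sq_add_cos_sq x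
  have e2 := Real.sin_sq_add_cos_sq (t / 2)
  rw [radialSubst, sin_eq_two_mul_half t, hc]
  generalize Real.sin (x + t / 2) = S at *
  generalize Real.sin x = a at *
  generalize Real.cos x = b at *
  generalize Real.sin (t / 2) = c at *
  generalize Real.cos (t / 2) = d at *
  field_simp
  rw [h]
  linear_combination 4 * c ^ 2 * d ^ 2 * e1 - 2 * (a ^ 2 * d ^ 2 + b ^ 2 * c ^ 2) * e2

lemma image_radialSubst {t : ℝ} (ht : t ∈ Set.Ioo 0 Real.pi) :
    MonotoneOn (radialSubst t) (Set.Icc 0 (Real.pi / 2)) ∧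
      radialSubst t '' Set.Icc 0 (Real.pi / 2) = Set.Icc (-1) 1 := by
  have hd : ∀ x ∈ Set.Icc 0 (Real.pi / 2), HasDerivAt (radialSubst t) _ x :=
    fun x hx => hasDerivAt_radialSubst (sin_add_half_pos ht hx).ne'
  have hcont : ContinuousOn (radialSubst t) (Set.Icc 0 (Real.pi / 2)) :=
    fun x hx => (hd x hx).continuousAt.continuousWithinAt
  have hmono : MonotoneOn (radialSubst t) (Set.Icc 0 (Real.pi / 2)) := by
    refine monotoneOn_of_hasDerivWithinAt_nonneg (convex_Icc _ _) hcont
      (fun x hx => (hd x (interior_subset hx)).hasDerivWithinAt) fun x _ => ?_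
    have := Real.sin_pos_of_pos_of_lt_pi ht.1 ht.2
    positivity
  refine ⟨hmono, ?_⟩
  rw [hcont.image_Icc_of_monotoneOn (by positivity) hmono]
  have hc : Real.cos (t / 2) ≠ 0 :=
    (Real.cos_pos_of_mem_Ioo ⟨by linarith [ht.1, Real.pi_pos], by linarith [ht.2]⟩).ne'
  congr 1
  · simp [radialSubst]
  · rw [radialSubst, add_comm, Real.sin_add_pi_div_two, Real.sin_pi_div_two]
    field_simp
    norm_num

/-- The integrands correspond under `r = radialSubst t x`, including at the endpoints, where the
base `sin x cos x` vanishes. -/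
lemma integrand_radialSubst (α p : ℝ) {t x : ℝ} (ht : t ∈ Set.Ioo 0 Real.pi)
    (hx : x ∈ Set.Icc 0 (Real.pi / 2)) :
    Real.sin t / Real.sin (x + t / 2) ^ 2 *
        ((1 - radialSubst t x ^ 2) ^ (α + 1 / p) *
          (1 - 2 * radialSubst t x * Real.cos t + radialSubst t x ^ 2) ^ (-((α + 2) / 2))) =
      2 ^ (α + 1 / p) * Real.sin t ^ (1 / p - 1) *
        (Real.sin x ^ (α + 1 / p) * Real.cos x ^ (α + 1 / p) *
          Real.sin (x + t / 2) ^ (-(α + 2 / p))) := by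
  have hS := sin_add_half_pos ht hx
  have hT := Real.sin_pos_of_pos_of_lt_pi ht.1 ht.2
  have ha : 0 ≤ Real.sin x :=
    Real.sin_nonneg_of_nonneg_of_le_pi hx.1 (by linarith [hx.2, Real.pi_pos])
  have hb : 0 ≤ Real.cos x :=
    Real.cos_nonneg_of_mem_Icc ⟨by linarith [hx.1, Real.pi_pos], hx.2⟩
  rw [one_sub_radialSubst_sq hS.ne', dist_sq_radialSubst hS.ne']
  generalize Real.sin (x + t / 2) = S at *
  generalize Real.sin t = T at *
  generalize Real.sin x = a at *
  generalize Real.cos x = b at *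
  have hTp : T ^ (1 / p - 1) = T * T ^ (α + 1 / p) * T ^ (-(α + 2)) := by
    nth_rewrite 2 [← Real.rpow_one T]
    rw [← Real.rpow_add hT, ← Real.rpow_add hT]; congr 1; ring
  have hSp : S ^ (-(α + 2 / p)) = (S ^ 2)⁻¹ * (S ^ (2 * (α + 1 / p)))⁻¹ * (S ^ (-(α + 2)))⁻¹ := by
    rw [← Real.rpow_natCast S 2, ← Real.rpow_neg hS.le, ← Real.rpow_neg hS.le,
      ← Real.rpow_neg hS.le, ← Real.rpow_add hS, ← Real.rpow_add hS]
    congr 1; push_cast; ring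
  have hD : ((T / S) ^ 2) ^ (-((α + 2) / 2)) = T ^ (-(α + 2)) / S ^ (-(α + 2)) := by
    rw [← Real.rpow_natCast, ← Real.rpow_mul (by positivity), ← Real.div_rpow hT.le hS.le]
    congr 1; push_cast; ring
  have hS2 : (S ^ 2) ^ (α + 1 / p) = S ^ (2 * (α + 1 / p)) := by
    rw [← Real.rpow_natCast, ← Real.rpow_mul hS.le]; norm_num
  rw [hD, hTp, hSp, Real.div_rpow (by positivity) (by positivity),
    Real.mul_rpow (by positivity) (by positivity), Real.mul_rpow (by positivity) hT.le,
    Real.mul_rpow ha hb, hS2]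
  ring

/-- The substitution identity
`∫_{-1}^{1} (1-r²)^{α+1/p} (1-2r cos t+r²)^{-(α+2)/2} dr = 2^{α+1/p} (sin t)^{1/p-1} G(t)`. -/
theorem radial_integral_eq_Gfun (α p t : ℝ) (hp : 1 < p) (hα : -1 < α)
    (ht : t ∈ Set.Ioo 0 Real.pi) :
    ∫ r in (-1:ℝ)..1, (1 - r^2) ^ (α + 1 / p) * (1 - 2 * r * Real.cos t + r^2) ^ (-((α + 2) / 2))
      = 2 ^ (α + 1 / p) * Real.sin t ^ (1 / p - 1) * Gfun α p t := by
  obtain ⟨hmono, himage⟩ := image_radialSubst ht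
  -- The change of variables for monotone maps needs no continuity of the integrand, which may
  -- blow up at the endpoints when `α + 1 / p < 0`.
  have key := MeasureTheory.integral_image_eq_integral_deriv_smul_of_monotoneOn
    measurableSet_Icc
    (fun x hx => (hasDerivAt_radialSubst (sin_add_half_pos ht hx).ne').hasDerivWithinAt) hmono
    (fun r : ℝ => (1 - r^2) ^ (α + 1 / p) *
      (1 - 2 * r * Real.cos t + r^2) ^ (-((α + 2) / 2)))
  rw [himage] at key
  rw [Gfun, ← intervalIntegral.integral_const_mul,
    intervalIntegral.integral_of_le (by norm_num), intervalIntegral.integral_of_le (by positivity),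
    ← MeasureTheory.integral_Icc_eq_integral_Ioc, ← MeasureTheory.integral_Icc_eq_integral_Ioc, key]
  exact MeasureTheory.setIntegral_congr_fun measurableSet_Icc
    fun x hx => integrand_radialSubst α p ht hx
end
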